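/- arXiv:1402.6973 — 2 statements merged into one kernel-verified Lean document; each statement's English description precedes it below -/
import Mathlib

section
/- In any execution of algorithm ProactiveGreedy on an arrival sequence with maximum burst size b, for every frame f and every ℓ ∈ {1,...,k}, the total number of frames mapped (directly or indirectly) by the mapping φ to f via the ℓ-th packet p_ℓ ∈ f is at most b·(1+b)^{ℓ−1}. -/
/-! ## Model: d-uniform bounded-delay goodput ({\sc d-uBDG}) instances -/

/-- An arrival sequence for the `d`-uniform bounded-delay goodput problem:
`n` frames, each consisting of `k` unit-size packets; packet `(f, ℓ)` (the `ℓ`-th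
packet of frame `f`, `0`-indexed) arrives at time `a f ℓ`, arrival times are
nondecreasing within each frame, and every packet has deadline `a f ℓ + d`. -/
structure ArrivalSeq (n k d : ℕ) where
  a : Fin n → Fin k → ℕ
  mono : ∀ f : Fin n, Monotone (a f)

namespace ArrivalSeq

variable {n k d : ℕ}

/-- At most `b` packets arrive in any single time slot (maximum burst size `b`). -/
def BurstBound (A : ArrivalSeq n k d) (b : ℕ) : Prop :=
  ∀ t : ℕ, Set.ncard {p : Fin n × Fin k | A.a p.1 p.2 = t} ≤ b

/-- A feasible schedule: at most one packet is delivered per time slot, every packet is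
delivered at most once, and every delivered packet is delivered between its arrival
time and its deadline. -/
def IsSchedule (A : ArrivalSeq n k d) (S : ℕ → Option (Fin n × Fin k)) : Prop :=
  (∀ (p : Fin n × Fin k) (t t' : ℕ), S t = some p → S t' = some p → t = t') ∧
  ∀ (p : Fin n × Fin k) (t : ℕ), S t = some p →
    A.a p.1 p.2 ≤ t ∧ t ≤ A.a p.1 p.2 + d

/-- A frame is successful under schedule `S` if all of its packets are delivered. -/
def Successful (A : ArrivalSeq n k d) (S : ℕ → Option (Fin n × Fin k)) (f : Fin n) : Prop :=
  ∀ ℓ : Fin k, ∃ t : ℕ, S t = some (f, ℓ)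

/-- The goodput of a schedule: the number of successful frames. -/
noncomputable def Goodput (A : ArrivalSeq n k d) (S : ℕ → Option (Fin n × Fin k)) : ℕ :=
  Set.ncard {f : Fin n | A.Successful S f}

/-- `S` is an optimal (feasible) schedule for `A`. -/
def IsOptimal (A : ArrivalSeq n k d) (S : ℕ → Option (Fin n × Fin k)) : Prop :=
  A.IsSchedule S ∧
    ∀ S' : ℕ → Option (Fin n × Fin k), A.IsSchedule S' → A.Goodput S' ≤ A.Goodput S

end ArrivalSeq

/-! ## Executions of scheduling algorithms -/

/-- A trace of the execution of a scheduling algorithm on the arrival sequence `A`: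
`deliver t` is the packet delivered at the scheduling substep of slot `t` (if any), and
`dropTime p` is the slot at which packet `p` is dropped by the algorithm (if ever). -/
structure AlgExec {n k d : ℕ} (A : ArrivalSeq n k d) where
  deliver : ℕ → Option (Fin n × Fin k)
  dropTime : Fin n × Fin k → Option ℕ

namespace AlgExec

variable {n k d : ℕ} {A : ArrivalSeq n k d}

/-- packet `p` is delivered at some time `≤ t`. -/
def DeliveredBy (E : AlgExec A) (p : Fin n × Fin k) (t : ℕ) : Prop :=
  ∃ s ≤ t, E.deliver s = some p

/-- packet `p` is delivered at some point of the execution. -/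
def Delivered (E : AlgExec A) (p : Fin n × Fin k) : Prop :=
  ∃ s : ℕ, E.deliver s = some p

/-- packet `p` is dropped at some time `< t`. -/
def DroppedBefore (E : AlgExec A) (p : Fin n × Fin k) (t : ℕ) : Prop :=
  ∃ s < t, E.dropTime p = some s

/-- packet `p` is pending at (the scheduling substep of) slot `t`: it has arrived, its
deadline has not passed, and it has been neither delivered nor dropped before `t`. -/
def Pending (E : AlgExec A) (p : Fin n × Fin k) (t : ℕ) : Prop :=
  A.a p.1 p.2 ≤ t ∧ t ≤ A.a p.1 p.2 + d ∧
    ¬ (∃ s < t, E.deliver s = some p) ∧ ¬ E.DroppedBefore p t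

/-- frame `f` is alive at time `t`: none of its packets has been dropped before `t`,
nor has expired (i.e., reached its deadline undelivered) before `t`. -/
def Alive (E : AlgExec A) (f : Fin n) (t : ℕ) : Prop :=
  ∀ ℓ : Fin k, ¬ E.DroppedBefore (f, ℓ) t ∧
    (A.a f ℓ + d < t → E.DeliveredBy (f, ℓ) (A.a f ℓ + d))

/-- frame `f` has some pending packet at time `t`. -/
def HasPending (E : AlgExec A) (f : Fin n) (t : ℕ) : Prop :=
  ∃ ℓ : Fin k, E.Pending (f, ℓ) t

/-- `I_t(f)`: the index of the first (minimal-index) pending packet of `f` at time `t`. -/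
noncomputable def Iidx (E : AlgExec A) (t : ℕ) (f : Fin n) : ℕ :=
  sInf {ℓ : ℕ | ∃ h : ℓ < k, E.Pending (f, ⟨ℓ, h⟩) t}

/-- frame `f` is completed by the execution: all of its packets are delivered. -/
def Completed (E : AlgExec A) (f : Fin n) : Prop :=
  ∀ ℓ : Fin k, E.Delivered (f, ℓ)

/-- `w f`: the number of packets of frame `f` delivered by the execution. -/
noncomputable def w (E : AlgExec A) (f : Fin n) : ℕ :=
  Set.ncard {ℓ : Fin k | E.Delivered (f, ℓ)}

/-- the first time at which some packet of `f` is dropped. -/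
noncomputable def dropT (E : AlgExec A) (f : Fin n) : ℕ :=
  sInf {t : ℕ | ∃ ℓ : Fin k, E.dropTime (f, ℓ) = some t}

/-- the index of the first packet of `f` to be dropped (the minimal index among the
packets of `f` dropped at the first drop time of `f`). -/
noncomputable def firstDropIdx (E : AlgExec A) (f : Fin n) : ℕ :=
  sInf {ℓ : ℕ | ∃ h : ℓ < k, E.dropTime (f, ⟨ℓ, h⟩) = some (E.dropT f)}

/-! ### The algorithm `ProactiveGreedy` -/

/-- The defining conditions of an execution of `ProactiveGreedy` (with arbitrary
tie-breaking): at every slot `t`,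
(i) a delivered packet is the first pending packet of an alive frame maximizing
`I_t` among all alive frames with pending packets;
(ii) a packet is delivered whenever some alive frame has a pending packet; and
(iii) a packet is dropped at `t` exactly when it is pending at `t` and either its
frame is not alive at `t` (line 1 of the algorithm) or the packet delivered at `t`
belongs to a different frame (line 4: packets of all non-chosen frames are dropped). -/
def PGValid (E : AlgExec A) : Prop :=
  (∀ (t : ℕ) (f : Fin n) (ℓ : Fin k), E.deliver t = some (f, ℓ) →
      E.Alive f t ∧ E.Pending (f, ℓ) t ∧ (ℓ : ℕ) = E.Iidx t f ∧
      ∀ f' : Fin n, E.Alive f' t → E.HasPending f' t → E.Iidx t f' ≤ E.Iidx t f) ∧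
  (∀ t : ℕ, (∃ f : Fin n, E.Alive f t ∧ E.HasPending f t) → E.deliver t ≠ none) ∧
  (∀ (p : Fin n × Fin k) (t : ℕ), E.dropTime p = some t ↔
      E.Pending p t ∧
        (¬ E.Alive p.1 t ∨ ∃ q : Fin n × Fin k, E.deliver t = some q ∧ q.1 ≠ p.1))

/-! ### The mapping `φ` used in the analysis of `ProactiveGreedy` -/

open Classical in
/-- The frame onto which a frame `f ∉ F_PG` is *directly* mapped by the mapping `φ`:
the frame whose packet is delivered at the time `t_f` at which the first packet of `f`
is dropped.  Frames of `F_PG` are mapped to themselves. -/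
noncomputable def phiNext (E : AlgExec A) (f : Fin n) : Fin n :=
  if E.Completed f then f
  else
    match E.deliver (E.dropT f) with
    | some q => q.1
    | none => f

/-- the frame onto which `f` is mapped after `j` successive (re-)mappings of `φ`. -/
noncomputable def phiChain (E : AlgExec A) (f : Fin n) (j : ℕ) : Fin n :=
  (E.phiNext)^[j] f

/-- frame `f` is *directly* mapped by `φ` via the packet `q` (of the frame `q.1`):
`q` is the packet delivered at the time the first packet of `f` is dropped. -/
def PhiDirectVia (E : AlgExec A) (f : Fin n) (q : Fin n × Fin k) : Prop :=
  ¬ E.Completed f ∧ E.deliver (E.dropT f) = some q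

/-- frame `f` is mapped (directly or indirectly, i.e. after re-mappings) by `φ`
via the packet `q`; `M(q)` is the set of frames mapped via `q`. -/
def PhiMappedVia (E : AlgExec A) (f : Fin n) (q : Fin n × Fin k) : Prop :=
  ∃ j : ℕ, E.PhiDirectVia (E.phiChain f j) q

/-! ### The algorithm `Greedy` -/

/-- packet `p` is still pending after the scheduling substep of slot `t`. -/
def PendingAfter (E : AlgExec A) (p : Fin n × Fin k) (t : ℕ) : Prop :=
  E.Pending p t ∧ E.deliver t ≠ some p

/-- frame `f` is infeasible after the scheduling substep of slot `t`: for some pending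
packet `(f, ℓ)` the pending packets of `f` of index `≤ ℓ` cannot all be scheduled in
the slots `t+1, …, a f ℓ + d`. -/
noncomputable def Infeasible (E : AlgExec A) (f : Fin n) (t : ℕ) : Prop :=
  ∃ ℓ : Fin k, E.PendingAfter (f, ℓ) t ∧
    A.a f ℓ + d < t + Set.ncard {j : Fin k | j ≤ ℓ ∧ E.PendingAfter (f, j) t}

/-- The defining conditions of an execution of `Greedy` (with arbitrary tie-breaking):
at every slot `t`,
(i) a delivered packet is the first pending packet of an alive frame maximizing `I_t`
among all alive frames with pending packets;
(ii) a packet is delivered whenever some alive frame has a pending packet; and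
(iii) a packet is dropped at `t` exactly when it is pending at `t`, it is not the
packet delivered at `t`, and either its frame is not alive at `t`, or its residual
slack at `t` is `0` (it expires), or its frame becomes infeasible at `t` (cleanup). -/
noncomputable def GreedyValid (E : AlgExec A) : Prop :=
  (∀ (t : ℕ) (f : Fin n) (ℓ : Fin k), E.deliver t = some (f, ℓ) →
      E.Alive f t ∧ E.Pending (f, ℓ) t ∧ (ℓ : ℕ) = E.Iidx t f ∧
      ∀ f' : Fin n, E.Alive f' t → E.HasPending f' t → E.Iidx t f' ≤ E.Iidx t f) ∧
  (∀ t : ℕ, (∃ f : Fin n, E.Alive f t ∧ E.HasPending f t) → E.deliver t ≠ none) ∧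
  (∀ (p : Fin n × Fin k) (t : ℕ), E.dropTime p = some t ↔
      E.Pending p t ∧ E.deliver t ≠ some p ∧
        (¬ E.Alive p.1 t ∨ A.a p.1 p.2 + d = t ∨ E.Infeasible p.1 t))

/-- packet `p = (f, ℓ)` is *eligible* at time `t`: it is in the buffer (pending) at
`t`, its frame is alive at `t`, and `ℓ = I_t(f)`. -/
def Eligible (E : AlgExec A) (p : Fin n × Fin k) (t : ℕ) : Prop :=
  E.Alive p.1 t ∧ E.Pending p t ∧ (p.2 : ℕ) = E.Iidx t p.1

/-! ### The mapping `ψ` used in the analysis of `Greedy` -/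

/-- The mapping `ψ` used in the analysis of `Greedy`, relative to the set `O` of frames
of a fixed optimal schedule and the maximum burst size `b`.  Every frame of
`F_G` (completed by `Greedy`) is mapped to itself (encoded as `dm f = none`); every
frame `f ∉ F_G` is directly mapped via a packet `q` delivered by `Greedy` no later than
the drop time `t_f` of `f`, whose index is at least the index of the first dropped
packet of `f`; every delivered packet has at most `2` frames of `O` and at most `b`
frames in total directly mapped to it. -/
structure PsiMapping (E : AlgExec A) (O : Set (Fin n)) (b : ℕ) where
  dm : Fin n → Option (Fin n × Fin k)
  mapsSelf : ∀ f : Fin n, E.Completed f → dm f = none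
  mapsAll : ∀ f : Fin n, ¬ E.Completed f → ∃ q : Fin n × Fin k, dm f = some q
  viaValid : ∀ (f : Fin n) (q : Fin n × Fin k), dm f = some q →
    E.firstDropIdx f ≤ (q.2 : ℕ) ∧ ∃ t ≤ E.dropT f, E.deliver t = some q
  capO : ∀ q : Fin n × Fin k, Set.ncard {f : Fin n | f ∈ O ∧ dm f = some q} ≤ 2
  capAll : ∀ q : Fin n × Fin k, Set.ncard {f : Fin n | dm f = some q} ≤ b

namespace PsiMapping

variable {E : AlgExec A} {O : Set (Fin n)} {b : ℕ}

/-- the frame onto which `f` is directly mapped by `ψ` (itself, if `f ∈ F_G`). -/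
def next (M : PsiMapping E O b) (f : Fin n) : Fin n :=
  match M.dm f with
  | some q => q.1
  | none => f

/-- the frame onto which `f` is mapped after `j` successive (re-)mappings of `ψ`. -/
def chain (M : PsiMapping E O b) (f : Fin n) (j : ℕ) : Fin n :=
  (M.next)^[j] f

/-- frame `f` is mapped (directly or indirectly) by `ψ` via the packet `q`;
`M(q)` is the set of frames mapped via `q`. -/
def MappedVia (M : PsiMapping E O b) (f : Fin n) (q : Fin n × Fin k) : Prop :=
  ∃ j : ℕ, M.dm (M.chain f j) = some q

end PsiMapping

end AlgExec

namespace AlgExec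

variable {n k d : ℕ} {A : ArrivalSeq n k d}

theorem pg_deliver_unique {E : AlgExec A} (hE : E.PGValid) {p : Fin n × Fin k} {s t : ℕ}
    (hs : E.deliver s = some p) (ht : E.deliver t = some p) : s = t := by
  obtain ⟨h1, -, -⟩ := hE
  obtain ⟨f, l⟩ := p
  have a1 := (h1 s f l hs).2.1.2.2.1
  have a2 := (h1 t f l ht).2.1.2.2.1
  rcases lt_trichotomy s t with h | h | h
  · exact absurd ⟨s, h, hs⟩ a2
  · exact h
  · exact absurd ⟨t, h, ht⟩ a1

theorem pg_core {E : AlgExec A} (hE : E.PGValid) (hkd : k ≤ d) (f : Fin n) (l : Fin k)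
    (hdel : ¬ E.DeliveredBy (f, l) (A.a f l + d)) :
    ∃ s ≤ A.a f l + d, E.dropTime (f, l) = some s := by
  by_contra hno
  push Not at hno
  have key : ∀ j : Fin (d + 1), ∃ m : Fin k, E.deliver (A.a f l + j) = some (f, m) := by
    intro j
    have hj : (j : ℕ) ≤ d := by omega
    have hp : E.Pending (f, l) (A.a f l + j) := by
      refine ⟨by simp, by simp; omega, ?_, ?_⟩
      · rintro ⟨s, hs, h⟩
        exact hdel ⟨s, by omega, h⟩
      · rintro ⟨s, hs, h⟩
        exact hno s (by omega) h
    have hnd := hno (A.a f l + j) (by omega)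
    rw [Ne, hE.2.2] at hnd
    push Not at hnd
    obtain ⟨hal, hq⟩ := hnd hp
    have hne := hE.2.1 (A.a f l + j) ⟨f, hal, l, hp⟩
    obtain ⟨⟨g, m⟩, hgm⟩ := Option.ne_none_iff_exists'.mp hne
    have hg := hq _ hgm
    simp only at hg
    subst hg
    exact ⟨m, hgm⟩
  choose m hm using key
  have hinj : Function.Injective m := by
    intro i j hij
    have h1 := hm i
    rw [hij] at h1
    have := pg_deliver_unique hE h1 (hm j)
    apply Fin.ext
    omega
  have := Fintype.card_le_of_injective m hinj
  simp at this
  omega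

theorem pg_drop {E : AlgExec A} (hE : E.PGValid) (hkd : k ≤ d) (f : Fin n)
    (hf : ¬ E.Completed f) :
    E.Alive f (E.dropT f) ∧
      ∃ l : Fin k, E.dropTime (f, l) = some (E.dropT f) ∧ E.Pending (f, l) (E.dropT f) := by
  have hex : {t : ℕ | ∃ l : Fin k, E.dropTime (f, l) = some t}.Nonempty := by
    unfold Completed at hf
    push Not at hf
    obtain ⟨l, hl⟩ := hf
    obtain ⟨s, -, hs⟩ := pg_core hE hkd f l (fun ⟨s, _, h⟩ => hl ⟨s, h⟩)
    exact ⟨s, l, hs⟩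
  obtain ⟨l, hl⟩ := Nat.sInf_mem hex
  refine ⟨?_, l, hl, ((hE.2.2 _ _).1 hl).1⟩
  have hnd : ∀ l : Fin k, ¬ E.DroppedBefore (f, l) (E.dropT f) := by
    rintro l ⟨s, hs, h⟩
    exact absurd (Nat.sInf_le (⟨l, h⟩ : s ∈ {t : ℕ | ∃ l : Fin k, E.dropTime (f, l) = some t}))
      (by simpa [dropT] using hs)
  intro l'
  refine ⟨hnd l', fun hlt => ?_⟩
  by_contra hc
  obtain ⟨s, hs, h⟩ := pg_core hE hkd f l' hc
  exact hnd l' ⟨s, by omega, h⟩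

theorem pg_direct_ne {E : AlgExec A} (hE : E.PGValid) (hkd : k ≤ d) {f : Fin n}
    {q : Fin n × Fin k} (h : E.PhiDirectVia f q) : q.1 ≠ f := by
  obtain ⟨hal, l, hl, -⟩ := pg_drop hE hkd f h.1
  obtain ⟨-, h' | ⟨q', hq', hne⟩⟩ := (hE.2.2 _ _).1 hl
  · exact absurd hal h'
  · rw [h.2] at hq'
    obtain rfl := Option.some.inj hq'
    exact hne

/-- A pending packet that did not arrive at the current slot belongs to a frame served in
the previous slot. -/
theorem pg_carry {E : AlgExec A} (hE : E.PGValid) {f : Fin n} {l : Fin k} {t : ℕ}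
    (hal : E.Alive f t) (hp : E.Pending (f, l) t) (hne : A.a f l ≠ t) :
    ∃ s m, s + 1 = t ∧ E.deliver s = some (f, m) := by
  obtain ⟨h1, h2, h3, h4⟩ := hp
  simp only at h1 h2
  obtain ⟨s, rfl⟩ : ∃ s, t = s + 1 := ⟨t - 1, by omega⟩
  have hp' : E.Pending (f, l) s := by
    refine ⟨by simp only; omega, by simp only; omega, ?_, ?_⟩
    · rintro ⟨r, hr, h⟩
      exact h3 ⟨r, by omega, h⟩
    · rintro ⟨r, hr, h⟩
      exact h4 ⟨r, by omega, h⟩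
  have hal' : E.Alive f s := by
    intro m
    obtain ⟨c1, c2⟩ := hal m
    refine ⟨?_, fun h => c2 (by omega)⟩
    rintro ⟨r, hr, h⟩
    exact c1 ⟨r, by omega, h⟩
  obtain ⟨⟨g, m⟩, hgm⟩ := Option.ne_none_iff_exists'.mp (hE.2.1 s ⟨f, hal', l, hp'⟩)
  refine ⟨s, m, rfl, ?_⟩
  have hnd : ¬ E.dropTime (f, l) = some s := fun h => h4 ⟨s, by omega, h⟩
  rw [hE.2.2] at hnd
  push Not at hnd
  have := (hnd hp').2 _ hgm
  simp only at this
  rw [hgm, this]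

theorem pg_direct_card {E : AlgExec A} (hE : E.PGValid) (hkd : k ≤ d) {b : ℕ}
    (hburst : A.BurstBound b) (q : Fin n × Fin k) :
    Set.ncard {f : Fin n | E.PhiDirectVia f q} ≤ b := by
  classical
  by_cases hq : ∃ t, E.deliver t = some q
  swap
  · have : {f : Fin n | E.PhiDirectVia f q} = ∅ := by
      ext f
      simp only [Set.mem_setOf_eq, Set.mem_empty_iff_false, iff_false]
      exact fun h => hq ⟨_, h.2⟩
    simp [this]
  obtain ⟨t, ht⟩ := hq
  have hD : ∀ f, E.PhiDirectVia f q → f ≠ q.1 ∧ E.Alive f t ∧ ∃ l, E.Pending (f, l) t := by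
    intro f hf
    have hft : E.dropT f = t := pg_deliver_unique hE hf.2 ht
    obtain ⟨hal, l, -, hl⟩ := pg_drop hE hkd f hf.1
    rw [hft] at hal hl
    exact ⟨(pg_direct_ne hE hkd hf).symm, hal, l, hl⟩
  have hqv := hE.1 t q.1 q.2 ht
  -- choose for each directly mapped frame an arriving packet
  have hch : ∀ f, ∃ p : Fin n × Fin k, E.PhiDirectVia f q →
      A.a p.1 p.2 = t ∧ (p.1 = f ∨ (p = q ∧ ∃ s m, s + 1 = t ∧ E.deliver s = some (f, m))) := by
    intro f
    by_cases hf : E.PhiDirectVia f q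
    swap
    · exact ⟨q, fun h => absurd h hf⟩
    obtain ⟨hne, hal, l, hl⟩ := hD f hf
    by_cases ha : A.a f l = t
    · exact ⟨(f, l), fun _ => ⟨ha, Or.inl rfl⟩⟩
    obtain ⟨s, m, hs, hm⟩ := pg_carry hE hal hl ha
    refine ⟨q, fun _ => ⟨?_, Or.inr ⟨rfl, s, m, hs, hm⟩⟩⟩
    by_contra hqa
    obtain ⟨s', m', hs', hm'⟩ := pg_carry hE hqv.1 hqv.2.1 hqa
    obtain rfl : s = s' := by omega
    rw [hm] at hm'
    exact hne (by simpa using congrArg Prod.fst (Option.some.inj hm'))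
  choose F hF using hch
  refine le_trans (Set.ncard_le_ncard_of_injOn F ?_ ?_ (Set.toFinite _)) (hburst t)
  · intro f hf
    exact (hF f hf).1
  · intro f hf g hg hfg
    obtain ⟨-, h1⟩ := hF f hf
    obtain ⟨-, h2⟩ := hF g hg
    have n1 := (hD f hf).1
    have n2 := (hD g hg).1
    rcases h1 with h1 | ⟨h1, s, m, hs, hm⟩
    · rcases h2 with h2 | ⟨h2, -⟩
      · rw [← h1, ← h2, hfg]
      · exact absurd (by rw [← h1, hfg, h2]) n1
    · rcases h2 with h2 | ⟨h2, s', m', hs', hm'⟩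
      · exact absurd (by rw [← h2, ← hfg, h1]) n2
      · obtain rfl : s = s' := by omega
        rw [hm] at hm'
        simpa using congrArg Prod.fst (Option.some.inj hm')

theorem pg_index_lt {E : AlgExec A} (hE : E.PGValid) (hkd : k ≤ d) {g : Fin n}
    {q : Fin n × Fin k} (h : E.PhiDirectVia g q) {l : Fin k} {s : ℕ}
    (hs : E.deliver s = some (g, l)) : l < q.2 := by
  obtain ⟨hal, l₀, hl₀, hp₀⟩ := pg_drop hE hkd g h.1
  set t := E.dropT g with ht
  have hqv := hE.1 t q.1 q.2 h.2
  have hle := hqv.2.2.2 g hal ⟨l₀, hp₀⟩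
  rw [← hqv.2.2.1] at hle
  have hgv := hE.1 s g l hs
  have hst : s < t := by
    by_contra hc
    rcases (not_lt.mp hc).lt_or_eq with hlt | heq
    · exact (hgv.1 l₀).1 ⟨t, hlt, hl₀⟩
    · have h2 := h.2
      rw [← ht, heq, hs] at h2
      have := Option.some.inj h2
      exact pg_direct_ne hE hkd h (by rw [← this])
  obtain ⟨hmk, hm⟩ := Nat.sInf_mem
    (s := {ℓ : ℕ | ∃ h : ℓ < k, E.Pending (g, ⟨ℓ, h⟩) t}) ⟨l₀, l₀.2, hp₀⟩
  change E.Iidx t g < k at hmk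
  change E.Pending (g, ⟨E.Iidx t g, hmk⟩) t at hm
  suffices (l : ℕ) < E.Iidx t g from Fin.lt_def.mpr (lt_of_lt_of_le this hle)
  by_contra hc
  rcases (not_lt.mp hc).lt_or_eq with hlt | heq
  · have hps : E.Pending (g, ⟨E.Iidx t g, hmk⟩) s := by
      obtain ⟨c1, c2, c3, c4⟩ := hm
      have hmono : A.a g ⟨E.Iidx t g, hmk⟩ ≤ A.a g l := A.mono g (by
        rw [Fin.le_def]; exact hlt.le)
      have := hgv.2.1.1
      simp only at this c1 c2
      refine ⟨by simp only; omega, by simp only; omega, ?_, ?_⟩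
      · rintro ⟨r, hr, h⟩
        exact c3 ⟨r, by omega, h⟩
      · rintro ⟨r, hr, h⟩
        exact c4 ⟨r, by omega, h⟩
    have : E.Iidx s g ≤ E.Iidx t g := Nat.sInf_le ⟨hmk, hps⟩
    have := hgv.2.2.1
    omega
  · apply hm.2.2.1
    refine ⟨s, hst, ?_⟩
    rw [hs]
    congr 2
    exact Fin.ext heq.symm

theorem pg_mapped_cases {E : AlgExec A} (hE : E.PGValid) (hkd : k ≤ d) {f : Fin n}
    {q : Fin n × Fin k} (h : E.PhiMappedVia f q) :
    E.PhiDirectVia f q ∨ ∃ g, E.PhiDirectVia g q ∧ ∃ l : Fin k, l < q.2 ∧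
      E.PhiMappedVia f (g, l) := by
  obtain ⟨j, hj⟩ := h
  cases j with
  | zero => exact Or.inl hj
  | succ j =>
    refine Or.inr ⟨_, hj, ?_⟩
    have hsucc : E.phiChain f (j + 1) = E.phiNext (E.phiChain f j) :=
      Function.iterate_succ_apply' _ _ _
    generalize hg : E.phiChain f (j + 1) = g at *
    generalize hx : E.phiChain f j = x at *
    unfold phiNext at hsucc
    split_ifs at hsucc with hc
    · subst hsucc
      exact absurd hc hj.1
    · split at hsucc
      · rename_i q' hq'
        obtain ⟨g', l⟩ := q'
        simp only at hsucc
        subst hsucc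
        refine ⟨l, pg_index_lt hE hkd hj hq', j, ?_⟩
        rw [hx]
        exact ⟨hc, hq'⟩
      · rename_i hn
        subst hsucc
        rw [hj.2] at hn
        cases hn

end AlgExec

theorem pg_mapping_load (n k d b : ℕ) (hkd : k ≤ d)
    (A : ArrivalSeq n k d) (hburst : A.BurstBound b)
    (E : AlgExec A) (hE : E.PGValid) :
    ∀ q : Fin n × Fin k,
      Set.ncard {f : Fin n | E.PhiMappedVia f q} ≤ b * (1 + b) ^ (q.2 : ℕ) := by
  classical
  suffices H : ∀ i : ℕ, ∀ q : Fin n × Fin k, (q.2 : ℕ) = i →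
      Set.ncard {f : Fin n | E.PhiMappedVia f q} ≤ b * (1 + b) ^ i from
    fun q => H _ q rfl
  intro i
  induction i using Nat.strong_induction_on with
  | _ i ih =>
  intro q hq
  let D : Finset (Fin n) := Finset.univ.filter (fun f => E.PhiDirectVia f q)
  let M : Fin n × Fin k → Finset (Fin n) :=
    fun p => Finset.univ.filter (fun f => E.PhiMappedVia f p)
  let N : Fin n → ℕ → Finset (Fin n) :=
    fun g m => if h : m < k then M (g, ⟨m, h⟩) else ∅
  have hM : ∀ p, {f : Fin n | E.PhiMappedVia f p}.ncard = (M p).card := by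
    intro p
    rw [← Set.ncard_coe_finset]
    simp [M]
  have hD : D.card ≤ b := by
    have := AlgExec.pg_direct_card hE hkd hburst q
    rw [← Set.ncard_coe_finset]
    simpa [D] using this
  have hN : ∀ g, ∀ m ∈ Finset.range i, (N g m).card ≤ b * (1 + b) ^ m := by
    intro g m hm
    rw [Finset.mem_range] at hm
    by_cases h : m < k
    · simp only [N, h, dif_pos]
      rw [← hM]
      exact ih m hm _ rfl
    · simp [N, h]
  have hgeom : ∀ i : ℕ, 1 + ∑ m ∈ Finset.range i, b * (1 + b) ^ m = (1 + b) ^ i := by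
    intro i
    induction i with
    | zero => simp
    | succ i ih => rw [Finset.sum_range_succ, ← add_assoc, ih]; ring
  have hsub : M q ⊆ D.biUnion (fun g => {g} ∪ (Finset.range i).biUnion (N g)) := by
    intro f hf
    simp only [M, Finset.mem_filter, Finset.mem_univ, true_and] at hf
    rw [Finset.mem_biUnion]
    rcases AlgExec.pg_mapped_cases hE hkd hf with h | ⟨g, hg, l, hl, hfl⟩
    · exact ⟨f, by simp [D, h], by simp⟩
    · refine ⟨g, by simp [D, hg], Finset.mem_union_right _ ?_⟩
      rw [Finset.mem_biUnion]
      refine ⟨l, ?_, ?_⟩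
      · rw [Finset.mem_range, ← hq]
        exact hl
      · simp [N, M, hfl]
  rw [hM]
  calc (M q).card ≤ _ := Finset.card_le_card hsub
    _ ≤ D.card * (1 + b) ^ i := by
      apply Finset.card_biUnion_le_card_mul
      intro g _
      rw [← hgeom]
      refine (Finset.card_union_le _ _).trans ?_
      rw [Finset.card_singleton]
      gcongr
      exact Finset.card_biUnion_le.trans (Finset.sum_le_sum (hN g))
    _ ≤ b * (1 + b) ^ i := by gcongr
end

section
/- In any execution of algorithm Greedy on a d-uniform arrival sequence where the adversary's schedule O is feasible, for every index ℓ and every time t at which there is no eligible packet with index at least ℓ in Greedy's buffer, Greedy has by time t delivered at least one packet with index at least ℓ for every two adversary packets with index at least ℓ that became eligible and were subsequently dropped by Greedy. -/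
namespace AlgExec

variable {n k d : ℕ} {A : ArrivalSeq n k d}

/-- slot `x` is busy for index `ℓ`: some packet of index at least `ℓ` is eligible. -/
def Busy (E : AlgExec A) (ℓ x : ℕ) : Prop :=
  ∃ p : Fin n × Fin k, ℓ ≤ (p.2 : ℕ) ∧ E.Eligible p x

lemma Iidx_le (E : AlgExec A) {f : Fin n} {j : Fin k} {t : ℕ} (h : E.Pending (f, j) t) :
    E.Iidx t f ≤ (j : ℕ) :=
  Nat.sInf_le ⟨j.2, h⟩

lemma Iidx_spec (E : AlgExec A) {f : Fin n} {t : ℕ} (h : E.HasPending f t) :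
    ∃ j : Fin k, (j : ℕ) = E.Iidx t f ∧ E.Pending (f, j) t := by
  obtain ⟨j, hj⟩ := h
  obtain ⟨h1, h2⟩ := Nat.sInf_mem (s := {ℓ : ℕ | ∃ h : ℓ < k, E.Pending (f, ⟨ℓ, h⟩) t})
    ⟨j, j.2, hj⟩
  exact ⟨⟨_, h1⟩, rfl, h2⟩

lemma pending_mono (E : AlgExec A) {p : Fin n × Fin k} {s t : ℕ} (h : E.Pending p t)
    (hst : s ≤ t) (ha : A.a p.1 p.2 ≤ s) : E.Pending p s := by
  obtain ⟨h1, h2, h3, h4⟩ := h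
  refine ⟨ha, by omega, ?_, ?_⟩
  · rintro ⟨x, hx, hd⟩
    exact h3 ⟨x, by omega, hd⟩
  · rintro ⟨x, hx, hd⟩
    exact h4 ⟨x, by omega, hd⟩

lemma alive_mono (E : AlgExec A) {f : Fin n} {s t : ℕ} (h : E.Alive f t)
    (hst : s ≤ t) : E.Alive f s := by
  intro j
  refine ⟨?_, fun hx => (h j).2 (by omega)⟩
  rintro ⟨x, hx, hd⟩
  exact (h j).1 ⟨x, by omega, hd⟩

lemma busy_deliver (E : AlgExec A) (hE : E.GreedyValid) {ℓ x : ℕ} (h : E.Busy ℓ x) :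
    ∃ q : Fin n × Fin k, E.deliver x = some q ∧ ℓ ≤ (q.2 : ℕ) := by
  obtain ⟨p, hp, hal, hpe, hI⟩ := h
  have hne := hE.2.1 x ⟨p.1, hal, p.2, hpe⟩
  obtain ⟨q, hq⟩ := Option.ne_none_iff_exists'.1 hne
  refine ⟨q, hq, ?_⟩
  obtain ⟨_, _, h3, h4⟩ := hE.1 x q.1 q.2 hq
  have := h4 p.1 hal ⟨p.2, hpe⟩
  omega

/-- An eligible packet stays eligible as long as it is pending. -/
lemma eligible_step (E : AlgExec A) (hE : E.GreedyValid) {p : Fin n × Fin k} {s : ℕ}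
    (h : E.Eligible p s) (hp : E.Pending p (s + 1)) : E.Eligible p (s + 1) := by
  obtain ⟨hal, hpe, hI⟩ := h
  have hnd : E.deliver s ≠ some p := fun hd => hp.2.2.1 ⟨s, by omega, hd⟩
  have key : ∀ j : Fin k, E.dropTime (p.1, j) ≠ some s := by
    intro j hj
    obtain ⟨hq1, hq2, hq3⟩ := (hE.2.2 (p.1, j) s).1 hj
    rcases hq3 with h1 | h1 | h1
    · exact h1 hal
    · have h2 := hp.2.1
      have h3 := E.Iidx_le hq1
      have h4 : A.a p.1 p.2 ≤ A.a p.1 j := A.mono p.1 (by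
        show (p.2 : ℕ) ≤ j
        omega)
      simp only at h1
      omega
    · exact hp.2.2.2 ⟨s, by omega, (hE.2.2 p s).2 ⟨hpe, hnd, Or.inr (Or.inr h1)⟩⟩
  have hal' : E.Alive p.1 (s + 1) := by
    intro j
    constructor
    · rintro ⟨x, hx, hd⟩
      rcases Nat.lt_succ_iff_lt_or_eq.1 hx with h1 | h1
      · exact (hal j).1 ⟨x, h1, hd⟩
      · subst h1
        exact key j hd
    · intro hlt
      rcases Nat.lt_succ_iff_lt_or_eq.1 hlt with h1 | h1
      · exact (hal j).2 h1
      · by_contra hnot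
        refine key j ((hE.2.2 (p.1, j) s).2 ⟨⟨?_, ?_, ?_, (hal j).1⟩, ?_, Or.inr (Or.inl h1)⟩)
        · simp only; omega
        · simp only; omega
        · rintro ⟨x, hx, hd⟩
          exact hnot ⟨x, by omega, hd⟩
        · intro hd
          exact hnot ⟨s, by omega, hd⟩
  refine ⟨hal', hp, ?_⟩
  obtain ⟨j, hj, hjp⟩ := E.Iidx_spec (f := p.1) ⟨p.2, hp⟩
  have hle := E.Iidx_le (f := p.1) hp
  have hja : A.a p.1 j ≤ A.a p.1 p.2 := A.mono p.1 (by
    show (j : ℕ) ≤ p.2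
    omega)
  have := E.Iidx_le (E.pending_mono hjp (Nat.le_succ s) (hja.trans hpe.1))
  omega

lemma eligible_of_pending (E : AlgExec A) (hE : E.GreedyValid) {p : Fin n × Fin k} {s t : ℕ}
    (h : E.Eligible p s) (hst : s ≤ t) (hp : E.Pending p t) : E.Eligible p t := by
  induction t, hst using Nat.le_induction with
  | base => exact h
  | succ x hx ih =>
    have := h.2.1.1
    exact E.eligible_step hE (ih (E.pending_mono hp (Nat.le_succ x) (by omega))) hp

/-- The adversary has delivered a packet of the frame by the time the eligible packet is
dropped. -/
lemma adversary_slot (E : AlgExec A) (hE : E.GreedyValid)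
    {S : ℕ → Option (Fin n × Fin k)} (hS : A.IsSchedule S) {p : Fin n × Fin k} {t : ℕ}
    (hsucc : A.Successful S p.1) (hel : E.Eligible p t) (hdrop : E.dropTime p = some t) :
    ∃ τ, A.a p.1 p.2 ≤ τ ∧ τ ≤ t ∧ ∃ q : Fin n × Fin k, S τ = some q ∧ q.1 = p.1 := by
  obtain ⟨hpe, hnd, hc⟩ := (hE.2.2 p t).1 hdrop
  rcases hc with h1 | h1 | ⟨j, hj, hlt⟩
  · exact absurd hel.1 h1
  · obtain ⟨τ, hτ⟩ := hsucc p.2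
    have := hS.2 _ _ hτ
    simp only at this
    exact ⟨τ, this.1, by omega, _, hτ, rfl⟩
  · by_contra hno
    choose T hT using hsucc
    have hsub : Set.MapsTo T {i : Fin k | i ≤ j ∧ E.PendingAfter (p.1, i) t}
        (Set.Ico (t + 1) (A.a p.1 j + d + 1)) := by
      rintro i ⟨hij, hi⟩
      have h2 := hS.2 _ _ (hT i)
      simp only at h2
      have h3 := E.Iidx_le hi.1
      have h4 := hel.2.2
      have h5 : A.a p.1 p.2 ≤ A.a p.1 i := A.mono p.1 (by
        show (p.2 : ℕ) ≤ i
        omega)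
      have h6 : A.a p.1 i ≤ A.a p.1 j := A.mono p.1 hij
      have h7 : ¬ T i ≤ t := fun h => hno ⟨T i, by omega, h, _, hT i, rfl⟩
      simp only [Set.mem_Ico]
      omega
    have hinj : Set.InjOn T {i : Fin k | i ≤ j ∧ E.PendingAfter (p.1, i) t} := by
      intro i _ i' _ hii
      have h2 := hT i
      rw [hii, hT i'] at h2
      simpa using h2.symm
    have hcard := Set.ncard_le_ncard_of_injOn T hsub hinj (Set.finite_Ico _ _)
    rw [← Finset.coe_Ico, Set.ncard_coe_finset, Nat.card_Ico] at hcard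
    have h8 := hj.1.2.1
    simp only at h8
    omega

/-- Start of the busy run. -/
lemma busy_start (E : AlgExec A) {ℓ t : ℕ} (h : E.Busy ℓ t) :
    ∃ u ≤ t, (∀ x, u ≤ x → x ≤ t → E.Busy ℓ x) ∧ (u = 0 ∨ ¬ E.Busy ℓ (u - 1)) := by
  induction t with
  | zero =>
    refine ⟨0, le_rfl, ?_, Or.inl rfl⟩
    intro x _ hx
    obtain rfl : x = 0 := by omega
    exact h
  | succ t ih =>
    by_cases hb : E.Busy ℓ t
    · obtain ⟨u, hu, h1, h2⟩ := ih hb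
      refine ⟨u, by omega, ?_, h2⟩
      intro x hx hxt
      rcases Nat.lt_succ_iff_lt_or_eq.1 (Nat.lt_succ_of_le hxt) with h3 | h3
      · exact h1 x hx (by omega)
      · exact h3 ▸ h
    · refine ⟨t + 1, le_rfl, ?_, Or.inr hb⟩
      intro x hx hxt
      obtain rfl : x = t + 1 := by omega
      exact h

lemma key_slot (E : AlgExec A) (hE : E.GreedyValid)
    {S : ℕ → Option (Fin n × Fin k)} (hS : A.IsSchedule S) {p : Fin n × Fin k} {ℓ t : ℕ}
    (hsucc : A.Successful S p.1) (hℓ : ℓ ≤ (p.2 : ℕ))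
    (hel : E.Eligible p t) (hdrop : E.dropTime p = some t) :
    (∃ τ ≤ t, E.Busy ℓ τ ∧ ∃ q : Fin n × Fin k, S τ = some q ∧ q.1 = p.1) ∨
    (∃ τ ≤ t, E.Busy ℓ τ ∧ ∃ q : Fin n × Fin k, E.deliver (τ - 1) = some q ∧ q.1 = p.1) := by
  obtain ⟨u, hut, hbusy, hu⟩ := E.busy_start (ℓ := ℓ) (t := t) ⟨p, hℓ, hel⟩
  by_cases ha : u ≤ A.a p.1 p.2
  · left
    obtain ⟨τ, h1, h2, h3⟩ := E.adversary_slot hE hS hsucc hel hdrop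
    exact ⟨τ, h2, hbusy τ (by omega) h2, h3⟩
  · right
    refine ⟨u, hut, hbusy u le_rfl hut, ?_⟩
    rcases hu with hu | hu
    · omega
    have hpu : E.Pending p (u - 1) := E.pending_mono hel.2.1 (by omega) (by omega)
    have hau : E.Alive p.1 (u - 1) := E.alive_mono hel.1 (by omega)
    obtain ⟨j, hj, hjp⟩ := E.Iidx_spec (f := p.1) ⟨p.2, hpu⟩
    have hjl : (j : ℕ) < ℓ := by
      by_contra hcon
      exact hu ⟨(p.1, j), by simp only; omega, hau, hjp, hj⟩
    by_contra hno
    have hnd : ¬ ∃ x < t, E.deliver x = some (p.1, j) := by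
      rintro ⟨x, hx, hd⟩
      rcases lt_trichotomy x (u - 1) with h1 | h1 | h1
      · exact hjp.2.2.1 ⟨x, h1, hd⟩
      · exact hno ⟨(p.1, j), h1 ▸ hd, rfl⟩
      · obtain ⟨q, hq, hql⟩ := E.busy_deliver hE (hbusy x (by omega) (by omega))
        rw [hd] at hq
        obtain rfl := Option.some.inj hq
        simp only at hql
        omega
    have hpt : E.Pending (p.1, j) t := by
      refine ⟨?_, ?_, hnd, (hel.1 j).1⟩
      · have := hjp.1
        omega
      · by_contra hcon
        simp only at hcon
        obtain ⟨x, hx, hd⟩ := (hel.1 j).2 (by omega)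
        exact hnd ⟨x, by omega, hd⟩
    have h1 := E.Iidx_le hpt
    have h2 := hel.2.2
    omega

end AlgExec

/-- In any execution of `Greedy` on a `d`-uniform arrival sequence
where the adversary's schedule `S` is feasible (with `O` the set of frames it
delivers), for every index `ℓ` and every time `t` at which there is no eligible packet
of index at least `ℓ` in `Greedy`'s buffer: `Greedy` has by time `t` delivered at least
one packet of index at least `ℓ` for every two adversary packets (packets of frames of
`O`) of index at least `ℓ` that became eligible and were subsequently dropped by
`Greedy`. -/
theorem greedy_adversary_drop_vs_delivered (n k d : ℕ) (hkd : k ≤ d)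
    (A : ArrivalSeq n k d) (E : AlgExec A) (hE : E.GreedyValid)
    (S : ℕ → Option (Fin n × Fin k)) (hS : A.IsSchedule S) :
    ∀ ℓ t : ℕ, (¬ ∃ p : Fin n × Fin k, ℓ ≤ (p.2 : ℕ) ∧ E.Eligible p t) →
      Set.ncard {p : Fin n × Fin k | A.Successful S p.1 ∧ ℓ ≤ (p.2 : ℕ) ∧
          ∃ s' ≤ t, E.dropTime p = some s' ∧ ∃ s ≤ s', E.Eligible p s}
        ≤ 2 * Set.ncard {p : Fin n × Fin k | ℓ ≤ (p.2 : ℕ) ∧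
            ∃ s ≤ t, E.deliver s = some p} := by
  intro ℓ t _
  have hD : ∀ p : Fin n × Fin k, (∃ s' ≤ t, E.dropTime p = some s' ∧ ∃ s ≤ s', E.Eligible p s) →
      ∃ s' ≤ t, E.dropTime p = some s' ∧ E.Eligible p s' := by
    rintro p ⟨s', hs', hd, s, hs, hel⟩
    exact ⟨s', hs', hd, E.eligible_of_pending hE hel hs ((hE.2.2 p s').1 hd).1⟩
  set D : Set (Fin n × Fin k) := {p | A.Successful S p.1 ∧ ℓ ≤ (p.2 : ℕ) ∧
          ∃ s' ≤ t, E.dropTime p = some s' ∧ ∃ s ≤ s', E.Eligible p s} with hDdef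
  -- at most one packet per frame
  have huniq : ∀ p ∈ D, ∀ p' ∈ D, p.1 = p'.1 → p = p' := by
    rintro p ⟨_, _, hp⟩ p' ⟨_, _, hp'⟩ hf
    obtain ⟨s, _, hd, hel⟩ := hD p hp
    obtain ⟨s', _, hd', hel'⟩ := hD p' hp'
    have hss : s = s' := by
      rcases lt_trichotomy s s' with h | h | h
      · exact absurd ⟨s, h, by rw [← hf]; exact hd⟩ (hel'.1 p.2).1
      · exact h
      · exact absurd ⟨s', h, by rw [hf]; exact hd'⟩ (hel.1 p'.2).1
    subst hss
    have h1 := hel.2.2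
    have h2 := hel'.2.2
    rw [hf, ← h2] at h1
    exact Prod.ext hf (Fin.ext h1)
  set B : Set ℕ := {x | x ≤ t ∧ E.Busy ℓ x} with hB
  have hBfin : B.Finite := (Set.finite_Iic t).subset fun x hx => hx.1
  -- each busy slot delivers
  have hBcard : B.ncard ≤ Set.ncard {p : Fin n × Fin k | ℓ ≤ (p.2 : ℕ) ∧
      ∃ s ≤ t, E.deliver s = some p} := by
    have hmaps : ∀ x ∈ B, ∃ q : Fin n × Fin k, E.deliver x = some q ∧ ℓ ≤ (q.2 : ℕ) :=
      fun x hx => E.busy_deliver hE hx.2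
    rw [← Set.ncard_image_of_injective _ (Option.some_injective (Fin n × Fin k))]
    refine Set.ncard_le_ncard_of_injOn E.deliver ?_ ?_ (Set.toFinite _)
    · intro x hx
      obtain ⟨q, hq, hql⟩ := hmaps x hx
      exact ⟨q, ⟨hql, x, hx.1, hq⟩, hq.symm⟩
    · intro x hx y hy hxy
      obtain ⟨q, h1, _⟩ := hmaps x hx
      have h2 := hxy ▸ h1
      have h3 := (hE.1 x _ _ h1).2.1.2.2.1
      have h4 := (hE.1 y _ _ h2).2.1.2.2.1
      rcases lt_trichotomy x y with h | h | h
      · exact absurd ⟨x, h, h1⟩ h4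
      · exact h
      · exact absurd ⟨y, h, h2⟩ h3
  have hinj : ∀ (F : ℕ → Option (Fin n × Fin k)),
      Set.ncard {p | p ∈ D ∧ ∃ τ ∈ B, ∃ q : Fin n × Fin k, F τ = some q ∧ q.1 = p.1}
        ≤ B.ncard := by
    intro F
    have : ∀ p : Fin n × Fin k, ∃ τ : ℕ,
        (∃ τ ∈ B, ∃ q : Fin n × Fin k, F τ = some q ∧ q.1 = p.1) →
        τ ∈ B ∧ ∃ q : Fin n × Fin k, F τ = some q ∧ q.1 = p.1 := by
      intro p
      by_cases h : ∃ τ ∈ B, ∃ q : Fin n × Fin k, F τ = some q ∧ q.1 = p.1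
      · obtain ⟨τ, h1, h2⟩ := h
        exact ⟨τ, fun _ => ⟨h1, h2⟩⟩
      · exact ⟨0, fun h' => absurd h' h⟩
    choose g hg using this
    refine Set.ncard_le_ncard_of_injOn g ?_ ?_ hBfin
    · rintro p ⟨_, hp⟩
      exact (hg p hp).1
    · rintro p ⟨hpD, hp⟩ p' ⟨hpD', hp'⟩ hpp
      obtain ⟨q, hq, hqf⟩ := (hg p hp).2
      obtain ⟨q', hq', hqf'⟩ := (hg p' hp').2
      rw [hpp, hq'] at hq
      obtain rfl := Option.some.inj hq
      exact huniq p hpD p' hpD' (hqf.symm.trans hqf')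
  have hcover : D ⊆
      {p | p ∈ D ∧ ∃ τ ∈ B, ∃ q : Fin n × Fin k, S τ = some q ∧ q.1 = p.1} ∪
      {p | p ∈ D ∧ ∃ τ ∈ B, ∃ q : Fin n × Fin k,
        E.deliver (τ - 1) = some q ∧ q.1 = p.1} := by
    intro p hp
    obtain ⟨s', hs', hd, hel⟩ := hD p hp.2.2
    rcases E.key_slot hE hS hp.1 hp.2.1 hel hd with ⟨τ, h1, h2, h3⟩ | ⟨τ, h1, h2, h3⟩
    · exact Or.inl ⟨hp, τ, ⟨h1.trans hs', h2⟩, h3⟩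
    · exact Or.inr ⟨hp, τ, ⟨h1.trans hs', h2⟩, h3⟩
  have h1 := Set.ncard_le_ncard hcover (Set.toFinite _)
  have h2 := Set.ncard_union_le
      {p | p ∈ D ∧ ∃ τ ∈ B, ∃ q : Fin n × Fin k, S τ = some q ∧ q.1 = p.1}
      {p | p ∈ D ∧ ∃ τ ∈ B, ∃ q : Fin n × Fin k,
        E.deliver (τ - 1) = some q ∧ q.1 = p.1}
  have h3 := hinj S
  have h4 := hinj (fun x => E.deliver (x - 1))
  omega
end
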